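/- Every nonzero 2-dimensional anti-pre-Lie Poisson algebra (A, ·, ∘) over ℂ is isomorphic to one of the following algebras, given on a basis e1, e2 (all unlisted products of basis elements, other than those forced by commutativity of ·, are zero): with · ≡ 0: the anti-pre-Lie algebras A01: e1∘e1 = e1, e2∘e2 = e2; A02: e1∘e1 = e1, e1∘e2 = e2, e2∘e1 = e2; A03: e1∘e1 = e1; A04: e1∘e1 = e2; A05: e1∘e1 = −e2, e2∘e1 = −e1; A06^λ: e2∘e1 = −e1, e2∘e2 = λ·e2; A07: e2∘e1 = −e1, e2∘e2 = e1 − e2; A08^λ (λ ≠ −1): e1∘e2 = (λ+1)·e1, e2∘e1 = λ·e1, e2∘e2 = (λ−1)·e2; A09: e1∘e2 = −e1, e2∘e1 = −2·e1, e2∘e2 = e1 − 3·e2; and (α, β ∈ ℂ): A10^{α,β}: e1·e1 = e1, e2·e2 = e2, e1∘e1 = α·e1, e2∘e2 = β·e2; A11^{α,β}: e1·e1 = e1, e1·e2 = e2, e1∘e1 = (2α−β)·e1 + e2, e1∘e2 = α·e2, e2∘e1 = β·e2; A12^{α,β}: e1·e1 = e1, e1·e2 = e2, e1∘e1 = (2α−β)·e1,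 e1∘e2 = α·e2, e2∘e1 = β·e2; A13^α: e1·e1 = e1, e1∘e1 = α·e1, e2∘e2 = e2; A14^α: e1·e1 = e1, e1∘e1 = α·e1; A15^α (α ≠ 1/2): e1·e1 = e2, e1∘e1 = (2−α)·e1, e1∘e2 = e2, e2∘e1 = α·e2; A16^α: e1·e1 = e2, e1∘e1 = (3/2)·e1 + α·e2, e1∘e2 = e2, e2∘e1 = (1/2)·e2; A17: e1·e1 = e2, e1∘e1 = −e1, e2∘e1 = e2; A18^α: e1·e1 = e2, e1∘e1 = α·e2. Moreover, among the algebras A10–A18 the only nontrivial isomorphism is A10^{α,β} ≅ A10^{β,α}. -/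

import Mathlib

noncomputable section

/-- The 2-dimensional complex vector space. -/
abbrev V2 : Type := Fin 2 → ℂ

/-- The bilinear multiplication on `V2` determined by a table of structure constants:
`c i j` is the product of the `i`-th and `j`-th basis vectors. -/
def tm (c : Fin 2 → Fin 2 → V2) : V2 → V2 → V2 :=
  fun x y => ∑ i, ∑ j, (x i * y j) • c i j

/-- Multiplication table with the given values of `e1*e1`, `e1*e2`, `e2*e1`, `e2*e2`. -/
def tbl (a b c d : V2) : Fin 2 → Fin 2 → V2 := ![![a, b], ![c, d]]

/-- The zero multiplication on `V2`. -/
def zm : V2 → V2 → V2 := fun _ _ => 0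

/-- Isomorphism of algebras with one multiplication: a ℂ-linear bijection preserving
the multiplication. -/
def Iso1 {A : Type*} [AddCommGroup A] [Module ℂ A] {B : Type*} [AddCommGroup B]
    [Module ℂ B] (μ : A → A → A) (ν : B → B → B) : Prop :=
  ∃ φ : A ≃ₗ[ℂ] B, ∀ x y, φ (μ x y) = ν (φ x) (φ y)

/-- Isomorphism of algebras with two multiplications: a ℂ-linear bijection preserving
both multiplications. -/
def Iso2 {A : Type*} [AddCommGroup A] [Module ℂ A] {B : Type*} [AddCommGroup B]
    [Module ℂ B] (μ₁ μ₂ : A → A → A) (ν₁ ν₂ : B → B → B) : Prop :=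
  ∃ φ : A ≃ₗ[ℂ] B,
    (∀ x y, φ (μ₁ x y) = ν₁ (φ x) (φ y)) ∧ (∀ x y, φ (μ₂ x y) = ν₂ (φ x) (φ y))

/-- The commutative associative algebra A01: `e1·e1 = e1`, `e2·e2 = e2`. -/
def cA01 : Fin 2 → Fin 2 → V2 := tbl ![1,0] 0 0 ![0,1]

/-- The commutative associative algebra A02: `e1·e1 = e1`, `e1·e2 = e2·e1 = e2`. -/
def cA02 : Fin 2 → Fin 2 → V2 := tbl ![1,0] ![0,1] ![0,1] 0

/-- The commutative associative algebra A03: `e1·e1 = e1`. -/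
def cA03 : Fin 2 → Fin 2 → V2 := tbl ![1,0] 0 0 0

/-- The commutative associative algebra A04: `e1·e1 = e2`. -/
def cA04 : Fin 2 → Fin 2 → V2 := tbl ![0,1] 0 0 0

/-- Index of the nonzero 2-dimensional anti-pre-Lie algebras A01–A09. -/
inductive APIdx : Type
  | a01 | a02 | a03 | a04 | a05
  | a06 (lam : ℂ)
  | a07
  | a08 (lam : ℂ) (h : lam ≠ -1)
  | a09

/-- The multiplication tables of the nonzero 2-dimensional anti-pre-Lie algebras
A01–A09. -/
def apAlg : APIdx → Fin 2 → Fin 2 → V2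
  | .a01 => tbl ![1,0] 0 0 ![0,1]                        -- e1∘e1=e1, e2∘e2=e2
  | .a02 => tbl ![1,0] ![0,1] ![0,1] 0                   -- e1∘e1=e1, e1∘e2=e2, e2∘e1=e2
  | .a03 => tbl ![1,0] 0 0 0                             -- e1∘e1=e1
  | .a04 => tbl ![0,1] 0 0 0                             -- e1∘e1=e2
  | .a05 => tbl ![0,-1] 0 ![-1,0] 0                      -- e1∘e1=-e2, e2∘e1=-e1
  | .a06 lam => tbl 0 0 ![-1,0] ![0,lam]                 -- e2∘e1=-e1, e2∘e2=λe2
  | .a07 => tbl 0 0 ![-1,0] ![1,-1]                      -- e2∘e1=-e1, e2∘e2=e1-e2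
  | .a08 lam _ => tbl 0 ![lam+1,0] ![lam,0] ![0,lam-1]
  | .a09 => tbl 0 ![-1,0] ![-2,0] ![1,-3]

/-- Index of the anti-pre-Lie Poisson algebras A10–A18 with nontrivial commutative
associative multiplication (A15^α only for α ≠ 1/2). -/
inductive APPIdx : Type
  | a10 (α β : ℂ)
  | a11 (α β : ℂ)
  | a12 (α β : ℂ)
  | a13 (α : ℂ)
  | a14 (α : ℂ)
  | a15 (α : ℂ) (h : α ≠ 1/2)
  | a16 (α : ℂ)
  | a17
  | a18 (α : ℂ)

/-- The commutative associative multiplication of A10–A18. -/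
def appMul : APPIdx → Fin 2 → Fin 2 → V2
  | .a10 _ _ => cA01
  | .a11 _ _ => cA02
  | .a12 _ _ => cA02
  | .a13 _ => cA03
  | .a14 _ => cA03
  | .a15 _ _ => cA04
  | .a16 _ => cA04
  | .a17 => cA04
  | .a18 _ => cA04

/-- The anti-pre-Lie multiplication of A10–A18. -/
def appCirc : APPIdx → Fin 2 → Fin 2 → V2
  | .a10 α β => tbl ![α,0] 0 0 ![0,β]
  | .a11 α β => tbl ![2*α-β,1] ![0,α] ![0,β] 0
  | .a12 α β => tbl ![2*α-β,0] ![0,α] ![0,β] 0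
  | .a13 α => tbl ![α,0] 0 0 ![0,1]
  | .a14 α => tbl ![α,0] 0 0 0
  | .a15 α _ => tbl ![2-α,0] ![0,1] ![0,α] 0
  | .a16 α => tbl ![3/2,α] ![0,1] ![0,1/2] 0
  | .a17 => tbl ![-1,0] 0 ![0,1] 0
  | .a18 α => tbl ![0,α] 0 0 0

/-!
If the commutative associative multiplication `·` is nonzero, then some square is nonzero. Either
`A` contains an idempotent and splits into Peirce components, which gives A01, A02 or A03, or `A` is
spanned by `x` and `x²` with `x³ = 0`, which gives A04. Idempotents, square-zero elements and
annihilators tell these four apart. Multiplication by a suitable element is the projection onto the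
first coordinate (A01, A03) or the nilpotent shift (A02, A04), and compatibility with that one
operator already forces `∘` to lie in a two-parameter diagonal family or a three-parameter family;
the automorphisms of `·` act on the parameters, and A10–A18 are normal forms for this action.

If `·` is zero and `∘` is commutative, then `∘` is associative, so it is again one of A01–A04.
Otherwise there are `x`, `y` with `[x, y] = x`. Then `[L_y, L_x] = L_x`, so that `L_x` is nilpotent
with square zero, and few structure constants are left.
-/

section Pairs

variable {K A : Type*} [Field K] [AddCommGroup A] [Module K A]

theorem exists_eq_smul_add_smul (hdim : Module.finrank K A = 2) {x y : A}
    (hxy : LinearIndependent K ![x, y]) (z : A) : ∃ a b : K, z = a • x + b • y := by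
  have hspan := hxy.span_eq_top_of_card_eq_finrank (by simp [hdim])
  rw [Matrix.range_cons_cons_empty] at hspan
  obtain ⟨a, b, h⟩ := Submodule.mem_span_pair.1 (hspan ▸ Submodule.mem_top : z ∈ _)
  exact ⟨a, b, h.symm⟩

theorem exists_smul_eq_of_not_linearIndependent {x y : A} (hx : x ≠ 0)
    (h : ¬ LinearIndependent K ![x, y]) : ∃ a : K, a • x = y := by
  simpa [LinearIndependent.pair_iff' hx] using h

theorem linearIndependent_pair_smul_right {x y : A} {c : K} (hc : c ≠ 0)
    (h : LinearIndependent K ![x, y]) : LinearIndependent K ![x, c • y] := by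
  simpa using (LinearIndependent.pair_smul_smul_iff isUnit_one hc.isUnit).2 h

end Pairs

section CommutativeAssociative

variable {K A : Type*} [Field K] [AddCommGroup A] [Module K A] {m : A →ₗ[K] A →ₗ[K] A}

theorem exists_apply_self_ne_zero [NeZero (2 : K)] (hcomm : ∀ x y, m x y = m y x)
    (hm : ∃ x y, m x y ≠ 0) : ∃ x, m x x ≠ 0 := by
  by_contra! halt
  obtain ⟨x, y, hxy⟩ := hm
  have hneg : -m x y = m x y := by rw [LinearMap.IsAlt.neg halt, hcomm]
  have htwo : (2 : K) • m x y = 0 := by rw [two_smul, ← eq_neg_iff_add_eq_zero, hneg]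
  exact hxy ((smul_eq_zero.1 htwo).resolve_left two_ne_zero)

theorem exists_idempotent_of_apply_self_eq_smul {x : A} {c : K} (hx : m x x ≠ 0)
    (hc : m x x = c • x) : ∃ e, e ≠ 0 ∧ m e e = e := by
  obtain ⟨hc0, hx0⟩ : c ≠ 0 ∧ x ≠ 0 := by simpa [hc] using hx
  refine ⟨c⁻¹ • x, by simp [hc0, hx0], ?_⟩
  simp [hc, hc0]

/-- A recurrence `x³ = b x + a x²` yields an idempotent as soon as `(a, b) ≠ 0`: for `b ≠ 0` the
element `(x² - a x) / b` acts as the identity on `x`, hence on `x²`; for `b = 0` one takes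
`x² / a²`. -/
theorem exists_idempotent_or_cube_eq_zero (hdim : Module.finrank K A = 2)
    (hcomm : ∀ x y, m x y = m y x) (hassoc : ∀ x y z, m (m x y) z = m x (m y z)) {x : A}
    (hx : LinearIndependent K ![x, m x x]) :
    (∃ e, e ≠ 0 ∧ m e e = e) ∨ m x (m x x) = 0 := by
  obtain ⟨b, a, hcube⟩ := exists_eq_smul_add_smul hdim hx (m x (m x x))
  have hfourth : m (m x x) (m x x) = b • m x x + a • m x (m x x) := by
    rw [hassoc, hcube, map_add, map_smul, map_smul, ← hcube]
  have hsq : m x x ≠ 0 := hx.ne_zero 1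
  by_cases hb : b = 0
  · by_cases ha : a = 0
    · exact .inr (by simp [hcube, ha, hb])
    · refine .inl ⟨(a ^ 2)⁻¹ • m x x, by simp [ha, hsq], ?_⟩
      simp only [map_smul, LinearMap.smul_apply, hfourth, hcube, hb]
      match_scalars
      · field_simp
        simp
      · simp
  · obtain ⟨e, he⟩ : ∃ e, e = b⁻¹ • (m x x - a • x) := ⟨_, rfl⟩
    have hex : m e x = x := by
      simp only [he, map_smul, map_sub, LinearMap.smul_apply, LinearMap.sub_apply,
        hcomm (m x x) x, hcube]
      match_scalars
      · field_simp
      · ring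
    have hexx : m e (m x x) = m x x := by rw [← hassoc, hex]
    refine .inl ⟨e, fun h0 => hx.ne_zero 0 (by simpa [h0] using hex.symm), ?_⟩
    calc m e e = m e (b⁻¹ • (m x x - a • x)) := congrArg (m e) he
      _ = e := by rw [map_smul, map_sub, map_smul, hex, hexx, ← he]

theorem exists_linearIndependent_apply_eq (hdim : Module.finrank K A = 2)
    (hassoc : ∀ x y z, m (m x y) z = m x (m y z)) {e : A} (he : e ≠ 0) (hee : m e e = e) :
    ∃ y, LinearIndependent K ![e, y] ∧ (m e y = y ∨ m e y = 0) := by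
  obtain ⟨z, hz⟩ := exists_linearIndependent_pair_of_one_lt_finrank (R := K) (by omega) he
  have hproj : m e (m e z) = m e z := by rw [← hassoc, hee]
  by_cases hez : LinearIndependent K ![e, m e z]
  · exact ⟨m e z, hez, .inl hproj⟩
  · obtain ⟨c, hc⟩ := exists_smul_eq_of_not_linearIndependent he hez
    refine ⟨(-c) • e + z, (LinearIndependent.pair_add_smul_right_iff _).2 hz, .inr ?_⟩
    simp [hee, ← hc]

theorem exists_apply_self_eq_smul_of_unital [IsAlgClosed K] [NeZero (2 : K)]
    (hdim : Module.finrank K A = 2) (hcomm : ∀ x y, m x y = m y x) {e y : A}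
    (hey : LinearIndependent K ![e, y]) (hee : m e e = e) (hy : m e y = y) :
    ∃ (z : A) (c : K), LinearIndependent K ![e, z] ∧ m e z = z ∧ m z z = c • z := by
  obtain ⟨r, s, hyy⟩ := exists_eq_smul_add_smul hdim hey (m y y)
  obtain ⟨t, ht⟩ : ∃ t : K, 1 * (t * t) + -s * t + -r = 0 :=
    exists_quadratic_eq_zero one_ne_zero (IsAlgClosed.exists_eq_mul_self _)
  refine ⟨(-t) • e + y, s - 2 * t, (LinearIndependent.pair_add_smul_right_iff _).2 hey, ?_, ?_⟩
  · simp [hee, hy]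
  · simp only [map_add, map_smul, LinearMap.add_apply, LinearMap.smul_apply, hee, hy,
      hcomm y e, hyy]
    match_scalars
    · linear_combination -ht
    · ring

theorem apply_self_eq_smul_of_apply_eq_zero (hdim : Module.finrank K A = 2)
    (hassoc : ∀ x y z, m (m x y) z = m x (m y z)) {e y : A}
    (hey : LinearIndependent K ![e, y]) (hee : m e e = e) (hy : m e y = 0) :
    ∃ c : K, m y y = c • y := by
  obtain ⟨r, s, hyy⟩ := exists_eq_smul_add_smul hdim hey (m y y)
  have hr : r • e = 0 := by simpa [hyy, hee, hy] using (hassoc e y y).symm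
  exact ⟨s, by rw [hyy, hr, zero_add]⟩

theorem exists_basis_products_of_unital [IsAlgClosed K] [NeZero (2 : K)]
    (hdim : Module.finrank K A = 2) (hcomm : ∀ x y, m x y = m y x) {e y : A}
    (hey : LinearIndependent K ![e, y]) (hee : m e e = e) (hy : m e y = y) :
    ∃ x y : A, LinearIndependent K ![x, y] ∧
      ((m x x = x ∧ m x y = 0 ∧ m y y = y) ∨ (m x x = x ∧ m x y = y ∧ m y y = 0)) := by
  obtain ⟨z, c, hez, hmez, hzz⟩ := exists_apply_self_eq_smul_of_unital hdim hcomm hey hee hy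
  by_cases hc : c = 0
  · exact ⟨e, z, hez, .inr ⟨hee, hmez, by simp [hzz, hc]⟩⟩
  · obtain ⟨f, hf⟩ : ∃ f, f = c⁻¹ • z := ⟨_, rfl⟩
    have hmef : m e f = f := by rw [hf, map_smul, hmez]
    have hff : m f f = f := by simp [hf, hzz, hc]
    have hfe : LinearIndependent K ![f, e] := by
      rw [hf, LinearIndependent.pair_symm_iff]
      exact linearIndependent_pair_smul_right (inv_ne_zero hc) hez
    refine ⟨f, (-1 : K) • f + e, (LinearIndependent.pair_add_smul_right_iff _).2 hfe, .inl ?_⟩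
    simp [hff, hee, hmef, hcomm f e]

theorem exists_basis_products_of_apply_eq_zero (hdim : Module.finrank K A = 2)
    (hassoc : ∀ x y z, m (m x y) z = m x (m y z)) {e y : A}
    (hey : LinearIndependent K ![e, y]) (hee : m e e = e) (hy : m e y = 0) :
    ∃ x y : A, LinearIndependent K ![x, y] ∧
      ((m x x = x ∧ m x y = 0 ∧ m y y = y) ∨ (m x x = x ∧ m x y = 0 ∧ m y y = 0)) := by
  obtain ⟨c, hyy⟩ := apply_self_eq_smul_of_apply_eq_zero hdim hassoc hey hee hy
  by_cases hc : c = 0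
  · exact ⟨e, y, hey, .inr ⟨hee, hy, by simp [hyy, hc]⟩⟩
  · exact ⟨e, c⁻¹ • y, linearIndependent_pair_smul_right (inv_ne_zero hc) hey,
      .inl ⟨hee, by simp [hy], by simp [hyy, hc]⟩⟩

theorem exists_basis_products_of_comm_of_assoc [IsAlgClosed K] [NeZero (2 : K)]
    (hdim : Module.finrank K A = 2) (hcomm : ∀ x y, m x y = m y x)
    (hassoc : ∀ x y z, m (m x y) z = m x (m y z)) (hm : ∃ x y, m x y ≠ 0) :
    ∃ x y : A, LinearIndependent K ![x, y] ∧
      ((m x x = x ∧ m x y = 0 ∧ m y y = y) ∨ (m x x = x ∧ m x y = y ∧ m y y = 0) ∨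
        (m x x = x ∧ m x y = 0 ∧ m y y = 0) ∨ (m x x = y ∧ m x y = 0 ∧ m y y = 0)) := by
  obtain ⟨x, hxx⟩ := exists_apply_self_ne_zero hcomm hm
  have hidem_or : (∃ e, e ≠ 0 ∧ m e e = e) ∨
      (LinearIndependent K ![x, m x x] ∧ m x (m x x) = 0) := by
    by_cases hli : LinearIndependent K ![x, m x x]
    · exact (exists_idempotent_or_cube_eq_zero hdim hcomm hassoc hli).imp_right (⟨hli, ·⟩)
    · obtain ⟨c, hc⟩ := exists_smul_eq_of_not_linearIndependent (by rintro rfl; simp at hxx) hli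
      exact .inl (exists_idempotent_of_apply_self_eq_smul hxx hc.symm)
  obtain ⟨e, he, hee⟩ | ⟨hli, hcube⟩ := hidem_or
  · obtain ⟨y, hey, hy | hy⟩ := exists_linearIndependent_apply_eq hdim hassoc he hee
    · obtain ⟨u, v, huv, h⟩ := exists_basis_products_of_unital hdim hcomm hey hee hy
      exact ⟨u, v, huv, h.imp_right .inl⟩
    · obtain ⟨u, v, huv, h⟩ := exists_basis_products_of_apply_eq_zero hdim hassoc hey hee hy
      exact ⟨u, v, huv, h.imp_right fun h' => .inr (.inl h')⟩
  · refine ⟨x, m x x, hli, .inr (.inr (.inr ⟨rfl, hcube, ?_⟩))⟩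
    rw [hassoc, hcube, map_zero]

end CommutativeAssociative

section AntiPreLie

variable {K A : Type*} [Field K] [AddCommGroup A] [Module K A] {m : A →ₗ[K] A →ₗ[K] A}

theorem assoc_of_comm_of_antiPreLie (hcomm : ∀ x y, m x y = m y x)
    (hap : ∀ x y z, m x (m y z) - m y (m x z) = m (m y x - m x y) z) (x y z : A) :
    m (m x y) z = m x (m y z) := by
  have hxz : m x (m z y) = m z (m x y) := by
    simpa [sub_eq_zero, hcomm z x] using hap x z y
  rw [hcomm (m x y) z, ← hxz, hcomm z y]

theorem linearIndependent_of_apply_ne_apply_swap {x y : A} (h : m x y ≠ m y x) :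
    LinearIndependent K ![x, y] := by
  have hx : x ≠ 0 := by rintro rfl; simp at h
  by_contra hli
  obtain ⟨a, rfl⟩ := exists_smul_eq_of_not_linearIndependent hx hli
  simp at h

theorem exists_commutator_eq_left (hdim : Module.finrank K A = 2)
    (hm : ∃ x y, m x y ≠ m y x) :
    ∃ x y : A, LinearIndependent K ![x, y] ∧ m x y - m y x = x := by
  suffices ∃ x y : A, x ≠ 0 ∧ m x y - m y x = x by
    obtain ⟨x, y, hx, hxy⟩ := this
    exact ⟨x, y, linearIndependent_of_apply_ne_apply_swap
      (sub_ne_zero.1 (hxy.symm ▸ hx)), hxy⟩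
  obtain ⟨x, y, hxy⟩ := hm
  obtain ⟨w, hw⟩ : ∃ w, w = m x y - m y x := ⟨_, rfl⟩
  have hw0 : w ≠ 0 := hw ▸ sub_ne_zero.2 hxy
  obtain ⟨p, q, hpq⟩ :=
    exists_eq_smul_add_smul hdim (linearIndependent_of_apply_ne_apply_swap hxy) w
  have hwx : m w x - m x w = -q • w := by
    conv_lhs => rw [hpq]
    simp only [map_add, map_smul, LinearMap.add_apply, LinearMap.smul_apply, hw]
    module
  have hwy : m w y - m y w = p • w := by
    conv_lhs => rw [hpq]
    simp only [map_add, map_smul, LinearMap.add_apply, LinearMap.smul_apply, hw]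
    module
  by_cases hp : p = 0
  · have hq : q ≠ 0 := by rintro rfl; simp [hp, hw0] at hpq
    refine ⟨w, (-q)⁻¹ • x, hw0, ?_⟩
    simp only [map_smul, LinearMap.smul_apply, ← smul_sub, hwx]
    exact inv_smul_smul₀ (neg_ne_zero.2 hq) w
  · refine ⟨w, p⁻¹ • y, hw0, ?_⟩
    simp only [map_smul, LinearMap.smul_apply, ← smul_sub, hwy]
    exact inv_smul_smul₀ hp w

theorem exists_normalized_products {x y : A} {k u v : K}
    (hxy : LinearIndependent K ![x, y]) (hxx : m x x = 0) (hkx : m x y = k • x)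
    (hyx : m y x = (k - 1) • x) (huv : m y y = u • x + v • y) :
    ∃ x y : A, LinearIndependent K ![x, y] ∧ m x x = 0 ∧ m x y = k • x ∧
      m y x = (k - 1) • x ∧ (m y y = v • y ∨ v = 2 * k - 1 ∧ m y y = x + v • y) := by
  by_cases hv : v = 2 * k - 1
  · by_cases hu : u = 0
    · exact ⟨x, y, hxy, hxx, hkx, hyx, .inl (by simp [huv, hu])⟩
    · refine ⟨u • x, y, ?_, by simp [hxx], ?_, ?_, .inr ⟨hv, huv⟩⟩
      · simpa using (LinearIndependent.pair_smul_smul_iff (Ne.isUnit hu) isUnit_one).2 hxy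
      · rw [map_smul, LinearMap.smul_apply, hkx, smul_comm]
      · rw [map_smul, hyx, smul_comm]
  · have hv' : v - (2 * k - 1) ≠ 0 := sub_ne_zero.2 hv
    refine ⟨x, (u / (v - (2 * k - 1))) • x + y,
      (LinearIndependent.pair_add_smul_right_iff _).2 hxy, hxx,
      by simp [hxx, hkx], by simp [hxx, hyx], .inl ?_⟩
    simp only [map_add, map_smul, LinearMap.add_apply, LinearMap.smul_apply, hxx, hkx, hyx, huv]
    match_scalars
    · field_simp
      ring
    · ring

theorem isNilpotent_of_mul_sub_mul_eq_self {B : Type*} [CharZero K] [Ring B]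
    [Algebra K B] [Module.Finite K B] {a b : B} (h : a * b - b * a = b) : IsNilpotent b := by
  by_contra hb
  have hpow (n : ℕ) : a * b ^ n - b ^ n * a = (n : K) • b ^ n := by
    induction n with
    | zero => simp
    | succ n ih =>
      calc a * b ^ (n + 1) - b ^ (n + 1) * a
          = (a * b ^ n - b ^ n * a) * b + b ^ n * (a * b - b * a) := by noncomm_ring
        _ = ((n + 1 : ℕ) : K) • b ^ (n + 1) := by
          rw [ih, h, smul_mul_assoc, ← pow_succ]; push_cast; module
  let ad : Module.End K B := LinearMap.mulLeft K a - LinearMap.mulRight K a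
  have heigen (n : ℕ) : ad.HasEigenvalue (n : K) :=
    Module.End.hasEigenvalue_of_hasEigenvector (x := b ^ n)
      ⟨Module.End.mem_eigenspace_iff.2 (hpow n), fun h0 => hb ⟨n, h0⟩⟩
  exact Set.infinite_of_injective_forall_mem Nat.cast_injective heigen ad.finite_hasEigenvalue

theorem pow_finrank_eq_zero_of_isNilpotent [Module.Finite K A] {f : Module.End K A}
    (hf : IsNilpotent f) : f ^ Module.finrank K A = 0 := by
  have hcayley := f.aeval_self_charpoly
  rwa [hf.charpoly_eq_X_pow_finrank, map_pow, Polynomial.aeval_X] at hcayley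

variable [CharZero K]

theorem apply_apply_eq_zero_of_commutator_eq_left (hdim : Module.finrank K A = 2)
    (hap : ∀ x y z, m x (m y z) - m y (m x z) = m (m y x - m x y) z) {x y : A}
    (hcom : m x y - m y x = x) (z : A) : m x (m x z) = 0 := by
  have : Module.Finite K A := Module.finite_of_finrank_pos (by omega)
  have hbracket : (m y : Module.End K A) * m x - m x * m y = m x := by
    ext z
    simpa [hcom] using hap y x z
  have hsq := pow_finrank_eq_zero_of_isNilpotent
    (isNilpotent_of_mul_sub_mul_eq_self (K := K) hbracket)
  rw [hdim, sq] at hsq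
  exact LinearMap.congr_fun hsq z

theorem exists_products_of_linearIndependent_apply_self [IsAlgClosed K]
    (hdim : Module.finrank K A = 2)
    (hap : ∀ x y z, m x (m y z) - m y (m x z) = m (m y x - m x y) z) {x y : A}
    (hcom : m x y - m y x = x) (hx : LinearIndependent K ![x, m x x]) :
    ∃ u v : A, LinearIndependent K ![u, v] ∧
      m u u = -v ∧ m u v = 0 ∧ m v u = -u ∧ m v v = 0 := by
  obtain ⟨w, hw⟩ : ∃ w, m x x = w := ⟨_, rfl⟩
  rw [hw] at hx
  have hxw : m x w = 0 := hw ▸ apply_apply_eq_zero_of_commutator_eq_left hdim hap hcom x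
  obtain ⟨p, q, rfl⟩ := exists_eq_smul_add_smul hdim hx y
  have hqwx : q • m w x = -x := by
    rw [← neg_eq_iff_eq_neg]
    simpa [hw, hxw] using hcom
  have hq : q ≠ 0 := by rintro rfl; simpa using hx.ne_zero 0 (by simpa using hqwx)
  have hwx : m w x = -q⁻¹ • x := by
    rw [← inv_smul_smul₀ hq (m w x), hqwx, smul_neg, neg_smul]
  have hww : m w w = 0 := by simpa [hw, hxw, hwx] using hap x w x
  obtain ⟨s, hs⟩ := IsAlgClosed.exists_eq_mul_self (-q)
  have hs0 : s ≠ 0 := by rintro rfl; simp [hq] at hs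
  refine ⟨s • x, q • w, (LinearIndependent.pair_smul_smul_iff hs0.isUnit hq.isUnit).2 hx,
    ?_, ?_, ?_, ?_⟩
  · simp [hw, smul_smul, ← hs]
  · simp [hxw]
  · simp [hwx, hq]
  · simp [hww]

theorem exists_products_of_not_linearIndependent_apply_self (hdim : Module.finrank K A = 2)
    (hap : ∀ x y z, m x (m y z) - m y (m x z) = m (m y x - m x y) z) {x y : A}
    (hxy : LinearIndependent K ![x, y]) (hcom : m x y - m y x = x)
    (hx : ¬ LinearIndependent K ![x, m x x]) :
    ∃ k u v : K, m x x = 0 ∧ m x y = k • x ∧ m y x = (k - 1) • x ∧ m y y = u • x + v • y ∧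
      (k = 0 ∨ v = k - 2) := by
  have hx0 : x ≠ 0 := hxy.ne_zero 0
  have hnil := apply_apply_eq_zero_of_commutator_eq_left hdim hap hcom
  obtain ⟨a, ha⟩ := exists_smul_eq_of_not_linearIndependent hx0 hx
  have hxx : m x x = 0 := by simpa [← ha, hx0] using hnil x
  obtain ⟨k, l, hkl⟩ := exists_eq_smul_add_smul hdim hxy (m x y)
  have hl : l = 0 := by
    have hlxy : l = 0 ∨ m x y = 0 := by
      rw [← smul_eq_zero, ← hnil y]
      conv_rhs => rw [hkl, map_add, map_smul, map_smul, hxx, smul_zero, zero_add]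
    exact hlxy.elim id fun h => (hxy.eq_zero_of_pair (hkl ▸ h)).2
  have hkx : m x y = k • x := by simpa [hl] using hkl
  have hyx : m y x = (k - 1) • x := by
    rw [sub_smul, one_smul, ← hkx]
    exact (sub_eq_of_eq_add' (sub_eq_iff_eq_add.1 hcom)).symm
  obtain ⟨u, v, huv⟩ := exists_eq_smul_add_smul hdim hxy (m y y)
  refine ⟨k, u, v, hxx, hkx, hyx, huv, ?_⟩
  have hmod : (k * (v - (k - 2))) • x = 0 := by
    have hapxyy := hap x y y
    rw [← neg_sub (m x y), hcom] at hapxyy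
    simp only [huv, hkx, hyx, hxx, map_add, map_smul, map_neg, LinearMap.neg_apply] at hapxyy
    rw [← sub_eq_zero] at hapxyy
    rw [← hapxyy]
    module
  simpa [hx0, sub_eq_zero] using hmod

end AntiPreLie

section Isomorphisms

theorem Iso1.iso2_zm {A : Type*} [AddCommGroup A] [Module ℂ A] {μ₁ μ₂ : A → A → A}
    {ν : V2 → V2 → V2} (h : Iso1 μ₂ ν) (hμ₁ : ∀ x y, μ₁ x y = 0) : Iso2 μ₁ μ₂ zm ν := by
  obtain ⟨φ, hφ⟩ := h
  exact ⟨φ, fun x y => by rw [hμ₁, map_zero, zm], hφ⟩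

variable {A B C : Type*} [AddCommGroup A] [Module ℂ A] [AddCommGroup B] [Module ℂ B]
  [AddCommGroup C] [Module ℂ C] {μ₁ μ₂ : A → A → A} {ν₁ ν₂ : B → B → B} {ξ₁ ξ₂ : C → C → C}

theorem Iso2.iso1_left (h : Iso2 μ₁ μ₂ ν₁ ν₂) : Iso1 μ₁ ν₁ :=
  let ⟨φ, hφ, _⟩ := h
  ⟨φ, hφ⟩

theorem Iso2.trans (h : Iso2 μ₁ μ₂ ν₁ ν₂) (h' : Iso2 ν₁ ν₂ ξ₁ ξ₂) : Iso2 μ₁ μ₂ ξ₁ ξ₂ := by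
  obtain ⟨φ, h₁, h₂⟩ := h
  obtain ⟨ψ, h₁', h₂'⟩ := h'
  exact ⟨φ.trans ψ, by simp [h₁, h₁'], by simp [h₂, h₂']⟩

end Isomorphisms

section Tables

/-- `t` is the table of structure constants of the bilinear map `m` on the family `v`. -/
def IsTable {ι K A : Type*} [Fintype ι] [Field K] [AddCommGroup A] [Module K A]
    (m : A →ₗ[K] A →ₗ[K] A) (v : ι → A) (t : ι → ι → ι → K) : Prop :=
  ∀ i j, m (v i) (v j) = ∑ k, t i j k • v k

/-- The multiplication `tm c` as a bilinear map. -/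
def tmHom (c : Fin 2 → Fin 2 → V2) : V2 →ₗ[ℂ] V2 →ₗ[ℂ] V2 :=
  LinearMap.mk₂ ℂ (tm c)
    (fun x y z => by simp [tm, add_mul, add_smul, Finset.sum_add_distrib])
    (fun a x y => by simp [tm, mul_assoc, mul_smul])
    (fun x y z => by simp [tm, mul_add, add_smul, Finset.sum_add_distrib])
    (fun a x y => by simp [tm, mul_left_comm, mul_smul])

@[simp]
theorem tmHom_apply (c : Fin 2 → Fin 2 → V2) (x y : V2) : tmHom c x y = tm c x y := rfl

theorem tm_tbl (a b c d x y : V2) :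
    tm (tbl a b c d) x y =
      (x 0 * y 0) • a + (x 0 * y 1) • b + (x 1 * y 0) • c + (x 1 * y 1) • d := by
  simp [tm, tbl, Fin.sum_univ_two, add_assoc]

variable {A : Type*} [AddCommGroup A] [Module ℂ A]

theorem isTable_pair_tbl_iff {m : A →ₗ[ℂ] A →ₗ[ℂ] A} {x y : A} {a b c d : V2} :
    IsTable m ![x, y] (tbl a b c d) ↔
      (m x x = a 0 • x + a 1 • y ∧ m x y = b 0 • x + b 1 • y) ∧
        m y x = c 0 • x + c 1 • y ∧ m y y = d 0 • x + d 1 • y := by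
  simp [IsTable, tbl, Fin.forall_fin_two, Fin.sum_univ_two]

theorem exists_isTable (b : Module.Basis (Fin 2) ℂ A) (m : A →ₗ[ℂ] A →ₗ[ℂ] A) :
    ∃ t, IsTable m b t :=
  ⟨fun i j => b.equivFun (m (b i) (b j)), fun i j => (b.sum_equivFun (m (b i) (b j))).symm⟩

theorem tm_single_single (c : Fin 2 → Fin 2 → V2) (i j : Fin 2) :
    tm c (Pi.single i 1) (Pi.single j 1) = c i j := by
  simp [tm, Pi.single_apply]

theorem equivFun_apply_eq_tm_iff {m : A →ₗ[ℂ] A →ₗ[ℂ] A} {t : Fin 2 → Fin 2 → V2}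
    (b : Module.Basis (Fin 2) ℂ A) :
    (∀ x y, b.equivFun (m x y) = tm t (b.equivFun x) (b.equivFun y)) ↔ IsTable m b t := by
  have hself (i : Fin 2) : b.equivFun (b i) = Pi.single i 1 := by
    ext j
    simp [Pi.single_apply, eq_comm]
  have hbasis (i j : Fin 2) : b.equivFun (m (b i) (b j)) = tm t (b.equivFun (b i))
      (b.equivFun (b j)) ↔ m (b i) (b j) = ∑ k, t i j k • b k := by
    rw [hself, hself, tm_single_single, ← b.equivFun_symm_apply, LinearEquiv.eq_symm_apply]
  refine ⟨fun h i j => (hbasis i j).1 (h _ _), fun h x y => ?_⟩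
  suffices m.compr₂ b.equivFun.toLinearMap =
      (tmHom t).compl₁₂ b.equivFun.toLinearMap b.equivFun.toLinearMap from
    LinearMap.congr_fun₂ this x y
  exact LinearMap.ext_basis b b fun i j => (hbasis i j).2 (h i j)

theorem iso1_tm_iff_exists_basis {m : A →ₗ[ℂ] A →ₗ[ℂ] A} {t : Fin 2 → Fin 2 → V2} :
    Iso1 (fun x y => m x y) (tm t) ↔ ∃ b : Module.Basis (Fin 2) ℂ A, IsTable m b t := by
  simp only [← equivFun_apply_eq_tm_iff]
  exact ⟨fun ⟨φ, hφ⟩ => ⟨.ofEquivFun φ, by simpa using hφ⟩, fun ⟨b, hb⟩ => ⟨b.equivFun, hb⟩⟩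

theorem iso2_tm_iff_exists_basis {m₁ m₂ : A →ₗ[ℂ] A →ₗ[ℂ] A} {t₁ t₂ : Fin 2 → Fin 2 → V2} :
    Iso2 (fun x y => m₁ x y) (fun x y => m₂ x y) (tm t₁) (tm t₂) ↔
      ∃ b : Module.Basis (Fin 2) ℂ A, IsTable m₁ b t₁ ∧ IsTable m₂ b t₂ := by
  simp only [← equivFun_apply_eq_tm_iff]
  exact ⟨fun ⟨φ, hφ⟩ => ⟨.ofEquivFun φ, by simpa using hφ⟩, fun ⟨b, hb⟩ => ⟨b.equivFun, hb⟩⟩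

theorem exists_basis_iff_exists_linearIndependent (hdim : Module.finrank ℂ A = 2)
    {P : (Fin 2 → A) → Prop} : (∃ b : Module.Basis (Fin 2) ℂ A, P b) ↔
      ∃ x y : A, LinearIndependent ℂ ![x, y] ∧ P ![x, y] := by
  constructor
  · rintro ⟨b, hb⟩
    have hpair : ![b 0, b 1] = b := by ext i; fin_cases i <;> rfl
    exact ⟨b 0, b 1, hpair ▸ b.linearIndependent, hpair ▸ hb⟩
  · rintro ⟨x, y, hxy, h⟩
    refine ⟨basisOfLinearIndependentOfCardEqFinrank hxy (by simp [hdim]), ?_⟩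
    rwa [coe_basisOfLinearIndependentOfCardEqFinrank]

end Tables

/-- Index of the nonzero 2-dimensional commutative associative algebras A01–A04. -/
inductive CAIdx : Type
  | a01 | a02 | a03 | a04

/-- The multiplication tables of the algebras A01–A04. -/
def caAlg : CAIdx → Fin 2 → Fin 2 → V2
  | .a01 => cA01
  | .a02 => cA02
  | .a03 => cA03
  | .a04 => cA04

section OneMultiplication

variable {A : Type*} [AddCommGroup A] [Module ℂ A] {m : A →ₗ[ℂ] A →ₗ[ℂ] A}

theorem iso1_tm_iff (hdim : Module.finrank ℂ A = 2) {t : Fin 2 → Fin 2 → V2} :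
    Iso1 (fun x y => m x y) (tm t) ↔
      ∃ x y : A, LinearIndependent ℂ ![x, y] ∧ IsTable m ![x, y] t :=
  iso1_tm_iff_exists_basis.trans
    (exists_basis_iff_exists_linearIndependent hdim (P := fun v => IsTable m v t))

theorem exists_iso1_caAlg (hdim : Module.finrank ℂ A = 2) (hcomm : ∀ x y, m x y = m y x)
    (hassoc : ∀ x y z, m (m x y) z = m x (m y z)) (hm : ∃ x y, m x y ≠ 0) :
    ∃ i, Iso1 (fun x y => m x y) (tm (caAlg i)) := by
  obtain ⟨x, y, hxy, hprod⟩ := exists_basis_products_of_comm_of_assoc hdim hcomm hassoc hm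
  simp only [iso1_tm_iff hdim]
  have hyx := hcomm y x
  obtain h | h | h | h := hprod
  · exact ⟨.a01, x, y, hxy, isTable_pair_tbl_iff.2 (by simp [h, hyx])⟩
  · exact ⟨.a02, x, y, hxy, isTable_pair_tbl_iff.2 (by simp [h, hyx])⟩
  · exact ⟨.a03, x, y, hxy, isTable_pair_tbl_iff.2 (by simp [h, hyx])⟩
  · exact ⟨.a04, x, y, hxy, isTable_pair_tbl_iff.2 (by simp [h, hyx])⟩

theorem exists_iso1_apAlg_of_ne_comm (hdim : Module.finrank ℂ A = 2)
    (hap : ∀ x y z, m x (m y z) - m y (m x z) = m (m y x - m x y) z)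
    (hm : ∃ x y, m x y ≠ m y x) : ∃ i, Iso1 (fun x y => m x y) (tm (apAlg i)) := by
  simp only [iso1_tm_iff hdim]
  obtain ⟨x, y, hxy, hcom⟩ := exists_commutator_eq_left hdim hm
  by_cases hx : LinearIndependent ℂ ![x, m x x]
  · obtain ⟨u, v, huv, h⟩ :=
      exists_products_of_linearIndependent_apply_self hdim hap hcom hx
    exact ⟨.a05, u, v, huv, isTable_pair_tbl_iff.2 (by simp [h])⟩
  obtain ⟨k, u, v, hxx, hkx, hyx, hyy, hkv⟩ :=
    exists_products_of_not_linearIndependent_apply_self hdim hap hxy hcom hx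
  obtain ⟨x, y, hxy, hxx, hkx, hyx, hyy⟩ := exists_normalized_products hxy hxx hkx hyx hyy
  obtain rfl | ⟨hk, rfl⟩ : k = 0 ∨ k ≠ 0 ∧ v = k - 2 := by tauto
  · obtain hyy | ⟨rfl, hyy⟩ := hyy
    · exact ⟨.a06 v, x, y, hxy, isTable_pair_tbl_iff.2 (by simp [hxx, hkx, hyx, hyy])⟩
    · exact ⟨.a07, x, y, hxy, isTable_pair_tbl_iff.2 (by simp [hxx, hkx, hyx, hyy])⟩
  · obtain hyy | ⟨hk', hyy⟩ := hyy
    · refine ⟨.a08 (k - 1) (by grind), x, y, hxy, isTable_pair_tbl_iff.2 ?_⟩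
      simp [hxx, hkx, hyx, hyy, sub_sub, one_add_one_eq_two]
    · obtain rfl : k = -1 := by linear_combination -hk'
      refine ⟨.a09, x, y, hxy, isTable_pair_tbl_iff.2 ?_⟩
      norm_num [hxx, hkx, hyx, hyy]

theorem exists_iso1_apAlg (hdim : Module.finrank ℂ A = 2)
    (hap : ∀ x y z, m x (m y z) - m y (m x z) = m (m y x - m x y) z)
    (hm : ∃ x y, m x y ≠ 0) : ∃ i, Iso1 (fun x y => m x y) (tm (apAlg i)) := by
  by_cases hcomm : ∀ x y, m x y = m y x
  · obtain ⟨i, hi⟩ :=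
      exists_iso1_caAlg hdim hcomm (assoc_of_comm_of_antiPreLie hcomm hap) hm
    cases i with
    | a01 => exact ⟨.a01, hi⟩
    | a02 => exact ⟨.a02, hi⟩
    | a03 => exact ⟨.a03, hi⟩
    | a04 => exact ⟨.a04, hi⟩
  · exact exists_iso1_apAlg_of_ne_comm hdim hap (by simpa using hcomm)

end OneMultiplication

section Invariants

/-- Existence of a nonzero idempotent, an isomorphism invariant separating A04 from A01–A03. -/
def HasIdempotent {A : Type*} [Zero A] (μ : A → A → A) : Prop :=
  ∃ x, x ≠ 0 ∧ μ x x = x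

/-- Existence of a nonzero element of square zero, an isomorphism invariant separating A01 from
A02–A04. -/
def HasSquareZero {A : Type*} [Zero A] (μ : A → A → A) : Prop :=
  ∃ x, x ≠ 0 ∧ μ x x = 0

/-- Existence of a nonzero left annihilator, an isomorphism invariant separating A01 and A02 from
A03 and A04. -/
def HasAnnihilator {A : Type*} [Zero A] (μ : A → A → A) : Prop :=
  ∃ x, x ≠ 0 ∧ ∀ y, μ x y = 0

variable {A B : Type*} [AddCommGroup A] [Module ℂ A] [AddCommGroup B] [Module ℂ B]
  {μ : A → A → A} {ν : B → B → B}

theorem Iso1.hasIdempotent_iff (h : Iso1 μ ν) : HasIdempotent μ ↔ HasIdempotent ν := by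
  obtain ⟨φ, hφ⟩ := h
  exact φ.toEquiv.exists_congr fun x => by simp [← hφ]

theorem Iso1.hasSquareZero_iff (h : Iso1 μ ν) : HasSquareZero μ ↔ HasSquareZero ν := by
  obtain ⟨φ, hφ⟩ := h
  exact φ.toEquiv.exists_congr fun x => by simp [← hφ]

theorem Iso1.hasAnnihilator_iff (h : Iso1 μ ν) : HasAnnihilator μ ↔ HasAnnihilator ν := by
  obtain ⟨φ, hφ⟩ := h
  exact φ.toEquiv.exists_congr fun x => by simp [φ.surjective.forall, ← hφ]

theorem V2.eq_vec_iff {x : V2} {a b : ℂ} : x = ![a, b] ↔ x 0 = a ∧ x 1 = b := by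
  simp [funext_iff, Fin.forall_fin_two]

theorem V2.eq_zero_iff {x : V2} : x = 0 ↔ x 0 = 0 ∧ x 1 = 0 := by
  simp [funext_iff, Fin.forall_fin_two]

theorem V2.vec_zero_zero : (![0, 0] : V2) = 0 := by
  simp

@[simp]
theorem tm_cA01 (x y : V2) : tm cA01 x y = ![x 0 * y 0, x 1 * y 1] := by
  simp [cA01, tm_tbl]

@[simp]
theorem tm_cA02 (x y : V2) : tm cA02 x y = ![x 0 * y 0, x 0 * y 1 + x 1 * y 0] := by
  simp [cA02, tm_tbl]

@[simp]
theorem tm_cA03 (x y : V2) : tm cA03 x y = ![x 0 * y 0, 0] := by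
  simp [cA03, tm_tbl]

@[simp]
theorem tm_cA04 (x y : V2) : tm cA04 x y = ![0, x 0 * y 0] := by
  simp [cA04, tm_tbl]

theorem hasIdempotent_caAlg_iff (i : CAIdx) : HasIdempotent (tm (caAlg i)) ↔ i ≠ .a04 := by
  cases i
  case a04 =>
    suffices ¬ HasIdempotent (tm cA04) by simpa [caAlg]
    rintro ⟨x, hx, hxx⟩
    rw [tm_cA04, eq_comm, V2.eq_vec_iff] at hxx
    obtain ⟨h0, h1⟩ := hxx
    exact hx (V2.eq_zero_iff.2 ⟨h0, by simp [h1, h0]⟩)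
  all_goals
    simp only [ne_eq, reduceCtorEq, not_false_eq_true, iff_true]
    exact ⟨![1, 0], by simp, by simp [caAlg]⟩

theorem hasSquareZero_caAlg_iff (i : CAIdx) : HasSquareZero (tm (caAlg i)) ↔ i ≠ .a01 := by
  cases i
  case a01 =>
    suffices ¬ HasSquareZero (tm cA01) by simpa [caAlg]
    rintro ⟨x, hx, hxx⟩
    exact hx (V2.eq_zero_iff.2 (by simpa [V2.eq_zero_iff] using hxx))
  all_goals
    simp only [ne_eq, reduceCtorEq, not_false_eq_true, iff_true]
    exact ⟨![0, 1], by simp, by simp [caAlg]⟩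

theorem hasAnnihilator_caAlg_iff (i : CAIdx) :
    HasAnnihilator (tm (caAlg i)) ↔ i = .a03 ∨ i = .a04 := by
  cases i
  case a01 =>
    suffices ¬ HasAnnihilator (tm cA01) by simpa [caAlg]
    rintro ⟨x, hx, hann⟩
    exact hx (by simpa [V2.eq_zero_iff] using hann ![1, 1])
  case a02 =>
    suffices ¬ HasAnnihilator (tm cA02) by simpa [caAlg]
    rintro ⟨x, hx, hann⟩
    exact hx (by simpa [V2.eq_zero_iff] using hann ![1, 0])
  all_goals
    simp only [reduceCtorEq, or_true, true_or, iff_true]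
    exact ⟨![0, 1], by simp, by simp [caAlg]⟩

theorem eq_of_iso1_caAlg {i j : CAIdx} (h : Iso1 (tm (caAlg i)) (tm (caAlg j))) : i = j := by
  have hidem := h.hasIdempotent_iff
  have hsq := h.hasSquareZero_iff
  have hann := h.hasAnnihilator_iff
  simp only [hasIdempotent_caAlg_iff, hasSquareZero_caAlg_iff, hasAnnihilator_caAlg_iff]
    at hidem hsq hann
  cases i <;> cases j <;> simp_all

end Invariants

section Compatibility

/-- The compatibility `2 (x ∘ (y · z)) = (z · x) ∘ y + z · (x ∘ y)` of an anti-pre-Lie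
multiplication `ν` with a commutative associative multiplication `μ`. -/
def Compatible {A : Type*} [AddCommGroup A] [Module ℂ A] (μ ν : A → A → A) : Prop :=
  ∀ x y z, (2 : ℂ) • ν x (μ y z) = ν (μ z x) y + μ z (ν x y)

theorem Compatible.of_iso2 {A B : Type*} [AddCommGroup A] [Module ℂ A] [AddCommGroup B]
    [Module ℂ B] {μ₁ μ₂ : A → A → A} {ν₁ ν₂ : B → B → B} (hcompat : Compatible μ₁ μ₂)
    (h : Iso2 μ₁ μ₂ ν₁ ν₂) : Compatible ν₁ ν₂ := by
  obtain ⟨φ, h₁, h₂⟩ := h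
  refine φ.surjective.forall₃.2 fun x y z => ?_
  simp only [← h₁, ← h₂, ← map_smul, ← map_add, hcompat x y z]

/-- The table of `∘` when `e1∘e1 = α e1`, `e2∘e2 = β e2` are the only nonzero products; it covers
A10, A13 and A14. -/
def diagTbl (α β : ℂ) : Fin 2 → Fin 2 → V2 := tbl ![α, 0] 0 0 ![0, β]

/-- The common shape of the tables of `∘` in A11, A12 and A15–A18: `k`, `δ` and `q` are the
coefficients of `e2` in `e1∘e2`, `e2∘e1` and `e1∘e1`. -/
def nilTbl (k δ q : ℂ) : Fin 2 → Fin 2 → V2 := tbl ![2 * k - δ, q] ![0, k] ![0, δ] 0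

theorem eq_tbl_iff {t : Fin 2 → Fin 2 → V2} {a b c d : V2} :
    t = tbl a b c d ↔ (t 0 0 = a ∧ t 0 1 = b) ∧ t 1 0 = c ∧ t 1 1 = d := by
  simp [tbl, funext_iff (f := t), funext_iff (f := t _), Fin.forall_fin_two]

theorem tm_vec_vec (t : Fin 2 → Fin 2 → V2) (a b c d : ℂ) :
    tm t ![a, b] ![c, d] =
      (a * c) • t 0 0 + (a * d) • t 0 1 + (b * c) • t 1 0 + (b * d) • t 1 1 := by
  simp [tm, Fin.sum_univ_two, add_assoc]

/-- The hypothesis is compatibility with multiplication by `e1` in A01 or A03. -/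
theorem exists_eq_diagTbl_of_proj {t : Fin 2 → Fin 2 → V2}
    (h : ∀ x y : V2, (2 : ℂ) • tm t x ![y 0, 0] = tm t ![x 0, 0] y + ![tm t x y 0, 0]) :
    ∃ α β, t = diagTbl α β := by
  have h00 : (2 : ℂ) • t 0 0 = t 0 0 + ![t 0 0 0, 0] := by
    simpa [tm_vec_vec] using h ![1, 0] ![1, 0]
  have h01 : 0 = t 0 1 + ![t 0 1 0, 0] := by simpa [tm_vec_vec] using h ![1, 0] ![0, 1]
  have h10 : (2 : ℂ) • t 1 0 = ![t 1 0 0, 0] := by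
    simpa [tm_vec_vec] using h ![0, 1] ![1, 0]
  have h11 : 0 = ![t 1 1 0, 0] := by simpa [tm_vec_vec] using h ![0, 1] ![0, 1]
  have hcoord (i : Fin 2) := And.intro (And.intro (congrFun h00 i) (congrFun h01 i))
    (And.intro (congrFun h10 i) (congrFun h11 i))
  simp only [Fin.forall_fin_two, Pi.smul_apply, Pi.add_apply, Pi.zero_apply, smul_eq_mul,
    Matrix.cons_val_zero, Matrix.cons_val_one] at hcoord
  refine ⟨t 0 0 0, t 1 1 1, eq_tbl_iff.2 ?_⟩
  simp only [V2.eq_vec_iff, V2.eq_zero_iff]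
  grind

/-- The hypothesis is compatibility with multiplication by `e2` in A02 or by `e1` in A04. -/
theorem exists_eq_nilTbl_of_shift {t : Fin 2 → Fin 2 → V2}
    (h : ∀ x y : V2, (2 : ℂ) • tm t x ![0, y 0] = tm t ![0, x 0] y + ![0, tm t x y 0]) :
    ∃ k δ q, t = nilTbl k δ q := by
  have h00 : (2 : ℂ) • t 0 1 = t 1 0 + ![0, t 0 0 0] := by
    simpa [tm_vec_vec] using h ![1, 0] ![1, 0]
  have h01 : 0 = t 1 1 + ![0, t 0 1 0] := by simpa [tm_vec_vec] using h ![1, 0] ![0, 1]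
  have h10 : (2 : ℂ) • t 1 1 = ![0, t 1 0 0] := by
    simpa [tm_vec_vec] using h ![0, 1] ![1, 0]
  have hcoord (i : Fin 2) :=
    And.intro (congrFun h00 i) (And.intro (congrFun h01 i) (congrFun h10 i))
  simp only [Fin.forall_fin_two, Pi.smul_apply, Pi.add_apply, Pi.zero_apply, smul_eq_mul,
    Matrix.cons_val_zero, Matrix.cons_val_one] at hcoord
  refine ⟨t 0 1 1, t 1 0 1, t 0 0 1, eq_tbl_iff.2 ?_⟩
  simp only [V2.eq_vec_iff, V2.eq_zero_iff]
  grind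

theorem exists_eq_diagTbl_of_compatible_cA01 {t : Fin 2 → Fin 2 → V2}
    (h : Compatible (tm cA01) (tm t)) : ∃ α β, t = diagTbl α β :=
  exists_eq_diagTbl_of_proj fun x y => by simpa using h x y ![1, 0]

theorem exists_eq_nilTbl_of_compatible_cA02 {t : Fin 2 → Fin 2 → V2}
    (h : Compatible (tm cA02) (tm t)) : ∃ k δ q, t = nilTbl k δ q :=
  exists_eq_nilTbl_of_shift fun x y => by simpa using h x y ![0, 1]

theorem exists_eq_diagTbl_of_compatible_cA03 {t : Fin 2 → Fin 2 → V2}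
    (h : Compatible (tm cA03) (tm t)) : ∃ α β, t = diagTbl α β :=
  exists_eq_diagTbl_of_proj fun x y => by simpa using h x y ![1, 0]

theorem exists_eq_nilTbl_of_compatible_cA04 {t : Fin 2 → Fin 2 → V2}
    (h : Compatible (tm cA04) (tm t)) : ∃ k δ q, t = nilTbl k δ q :=
  exists_eq_nilTbl_of_shift fun x y => by simpa using h x y ![1, 0]

end Compatibility

section Automorphisms

theorem linearIndependent_pair_iff {p q : V2} :
    LinearIndependent ℂ ![p, q] ↔ p 0 * q 1 - p 1 * q 0 ≠ 0 := by
  rw [← Matrix.of_row ![p, q], Matrix.linearIndependent_rows_iff_isUnit,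
    Matrix.isUnit_iff_isUnit_det, Matrix.det_fin_two, isUnit_iff_ne_zero]
  simp [mul_comm]

theorem iso2_tm_iff {s t s' t' : Fin 2 → Fin 2 → V2} :
    Iso2 (tm s) (tm t) (tm s') (tm t') ↔ ∃ p q : V2, (p 0 * q 1 - p 1 * q 0 ≠ 0 ∧
      IsTable (tmHom s) ![p, q] s') ∧ IsTable (tmHom t) ![p, q] t' := by
  simp only [and_assoc, ← linearIndependent_pair_iff]
  exact (iso2_tm_iff_exists_basis (m₁ := tmHom s) (m₂ := tmHom t)).trans
    (exists_basis_iff_exists_linearIndependent (by simp)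
      (P := fun v => IsTable (tmHom s) v s' ∧ IsTable (tmHom t) v t'))

theorem isTable_cA01_iff {p q : V2} :
    (p 0 * q 1 - p 1 * q 0 ≠ 0 ∧ IsTable (tmHom cA01) ![p, q] cA01) ↔
      (p = ![1, 0] ∧ q = ![0, 1]) ∨ (p = ![0, 1] ∧ q = ![1, 0]) := by
  rw [cA01, isTable_pair_tbl_iff, ← cA01]
  simp only [tmHom_apply, tm_cA01, funext_iff, Fin.forall_fin_two, Pi.add_apply, Pi.smul_apply,
    Pi.zero_apply, smul_eq_mul, Matrix.cons_val_zero, Matrix.cons_val_one, one_mul,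
    zero_mul, add_zero, zero_add]
  grind

theorem isTable_cA02_iff {p q : V2} :
    (p 0 * q 1 - p 1 * q 0 ≠ 0 ∧ IsTable (tmHom cA02) ![p, q] cA02) ↔
      p = ![1, 0] ∧ ∃ d, d ≠ 0 ∧ q = ![0, d] := by
  rw [cA02, isTable_pair_tbl_iff, ← cA02]
  simp only [tmHom_apply, tm_cA02, funext_iff, Fin.forall_fin_two, Pi.add_apply, Pi.smul_apply,
    Pi.zero_apply, smul_eq_mul, Matrix.cons_val_zero, Matrix.cons_val_one, one_mul,
    zero_mul, add_zero, zero_add]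
  exact ⟨fun h => ⟨by grind, q 1, by grind⟩, by grind⟩

theorem isTable_cA03_iff {p q : V2} :
    (p 0 * q 1 - p 1 * q 0 ≠ 0 ∧ IsTable (tmHom cA03) ![p, q] cA03) ↔
      p = ![1, 0] ∧ ∃ d, d ≠ 0 ∧ q = ![0, d] := by
  rw [cA03, isTable_pair_tbl_iff, ← cA03]
  simp only [tmHom_apply, tm_cA03, funext_iff, Fin.forall_fin_two, Pi.add_apply, Pi.smul_apply,
    Pi.zero_apply, smul_eq_mul, Matrix.cons_val_zero, Matrix.cons_val_one, one_mul,
    zero_mul, add_zero]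
  exact ⟨fun h => ⟨by grind, q 1, by grind⟩, by grind⟩

theorem isTable_cA04_iff {p q : V2} :
    (p 0 * q 1 - p 1 * q 0 ≠ 0 ∧ IsTable (tmHom cA04) ![p, q] cA04) ↔
      ∃ a b, a ≠ 0 ∧ p = ![a, a * b] ∧ q = ![0, a ^ 2] := by
  rw [cA04, isTable_pair_tbl_iff, ← cA04]
  simp only [tmHom_apply, tm_cA04, funext_iff, Fin.forall_fin_two, Pi.add_apply, Pi.smul_apply,
    Pi.zero_apply, smul_eq_mul, Matrix.cons_val_zero, Matrix.cons_val_one, one_mul,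
    zero_mul, add_zero, zero_add]
  exact ⟨fun h => ⟨p 0, p 1 / p 0, by grind⟩, by grind⟩

theorem isTable_diagTbl_iff {α β α' β' d : ℂ} (hd : d ≠ 0) :
    IsTable (tmHom (diagTbl α β)) ![![1, 0], ![0, d]] (diagTbl α' β') ↔
      α' = α ∧ β' = d * β := by
  simp only [diagTbl, isTable_pair_tbl_iff, tmHom_apply, tm_tbl, funext_iff, Fin.forall_fin_two,
    Pi.add_apply, Pi.smul_apply, Pi.zero_apply, smul_eq_mul, Matrix.cons_val_zero,
    Matrix.cons_val_one]
  grind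

theorem isTable_diagTbl_swap_iff {α β α' β' : ℂ} :
    IsTable (tmHom (diagTbl α β)) ![![0, 1], ![1, 0]] (diagTbl α' β') ↔ α' = β ∧ β' = α := by
  simp [diagTbl, isTable_pair_tbl_iff, tm_tbl, eq_comm]

theorem isTable_nilTbl_iff {k δ q k' δ' q' d : ℂ} (hd : d ≠ 0) :
    IsTable (tmHom (nilTbl k δ q)) ![![1, 0], ![0, d]] (nilTbl k' δ' q') ↔
      k' = k ∧ δ' = δ ∧ q = d * q' := by
  simp only [nilTbl, isTable_pair_tbl_iff, tmHom_apply, tm_tbl, funext_iff, Fin.forall_fin_two,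
    Pi.add_apply, Pi.smul_apply, Pi.zero_apply, smul_eq_mul, Matrix.cons_val_zero,
    Matrix.cons_val_one]
  grind

theorem isTable_nilTbl_shear_iff {k δ q k' δ' q' a b : ℂ} (ha : a ≠ 0) :
    IsTable (tmHom (nilTbl k δ q)) ![![a, a * b], ![0, a ^ 2]] (nilTbl k' δ' q') ↔
      k' = a * k ∧ δ' = a * δ ∧ q' = q + b * (2 * δ - k) := by
  simp only [nilTbl, isTable_pair_tbl_iff, tmHom_apply, tm_tbl, funext_iff, Fin.forall_fin_two,
    Pi.add_apply, Pi.smul_apply, Pi.zero_apply, smul_eq_mul, Matrix.cons_val_zero,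
    Matrix.cons_val_one]
  grind

theorem iso2_diagTbl_cA01_iff {α β α' β' : ℂ} :
    Iso2 (tm cA01) (tm (diagTbl α β)) (tm cA01) (tm (diagTbl α' β')) ↔
      (α' = α ∧ β' = β) ∨ (α' = β ∧ β' = α) := by
  have hid := isTable_diagTbl_iff (α := α) (β := β) (α' := α') (β' := β') one_ne_zero
  simp only [iso2_tm_iff, isTable_cA01_iff, or_and_right, exists_or, and_assoc, exists_and_left,
    exists_eq_left, hid, isTable_diagTbl_swap_iff, one_mul]

theorem iso2_nilTbl_cA02_iff {k δ q k' δ' q' : ℂ} :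
    Iso2 (tm cA02) (tm (nilTbl k δ q)) (tm cA02) (tm (nilTbl k' δ' q')) ↔
      k' = k ∧ δ' = δ ∧ ∃ d, d ≠ 0 ∧ q = d * q' := by
  simp only [iso2_tm_iff, isTable_cA02_iff]
  constructor
  · rintro ⟨_, _, ⟨rfl, d, hd, rfl⟩, h⟩
    obtain ⟨hk, hδ, hq⟩ := (isTable_nilTbl_iff hd).1 h
    exact ⟨hk, hδ, d, hd, hq⟩
  · rintro ⟨hk, hδ, d, hd, hq⟩
    exact ⟨_, _, ⟨rfl, d, hd, rfl⟩, (isTable_nilTbl_iff hd).2 ⟨hk, hδ, hq⟩⟩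

theorem iso2_diagTbl_cA03_iff {α β α' β' : ℂ} :
    Iso2 (tm cA03) (tm (diagTbl α β)) (tm cA03) (tm (diagTbl α' β')) ↔
      α' = α ∧ ∃ d, d ≠ 0 ∧ β' = d * β := by
  simp only [iso2_tm_iff, isTable_cA03_iff]
  constructor
  · rintro ⟨_, _, ⟨rfl, d, hd, rfl⟩, h⟩
    obtain ⟨hα, hβ⟩ := (isTable_diagTbl_iff hd).1 h
    exact ⟨hα, d, hd, hβ⟩
  · rintro ⟨hα, d, hd, hβ⟩
    exact ⟨_, _, ⟨rfl, d, hd, rfl⟩, (isTable_diagTbl_iff hd).2 ⟨hα, hβ⟩⟩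

theorem iso2_nilTbl_cA04_iff {k δ q k' δ' q' : ℂ} :
    Iso2 (tm cA04) (tm (nilTbl k δ q)) (tm cA04) (tm (nilTbl k' δ' q')) ↔
      ∃ a b, a ≠ 0 ∧ k' = a * k ∧ δ' = a * δ ∧ q' = q + b * (2 * δ - k) := by
  simp only [iso2_tm_iff, isTable_cA04_iff]
  constructor
  · rintro ⟨_, _, ⟨a, b, ha, rfl, rfl⟩, h⟩
    exact ⟨a, b, ha, (isTable_nilTbl_shear_iff ha).1 h⟩
  · rintro ⟨a, b, ha, h⟩
    exact ⟨_, _, ⟨a, b, ha, rfl, rfl⟩, (isTable_nilTbl_shear_iff ha).2 h⟩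

end Automorphisms

section Classification

theorem appCirc_a10 (α β : ℂ) : appCirc (.a10 α β) = diagTbl α β := rfl

theorem appCirc_a11 (α β : ℂ) : appCirc (.a11 α β) = nilTbl α β 1 := rfl

theorem appCirc_a12 (α β : ℂ) : appCirc (.a12 α β) = nilTbl α β 0 := rfl

theorem appCirc_a13 (α : ℂ) : appCirc (.a13 α) = diagTbl α 1 := rfl

theorem appCirc_a14 (α : ℂ) : appCirc (.a14 α) = diagTbl α 0 := by
  simp [appCirc, diagTbl, V2.vec_zero_zero]

theorem appCirc_a15 (α : ℂ) (h : α ≠ 1 / 2) : appCirc (.a15 α h) = nilTbl 1 α 0 := by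
  simp [appCirc, nilTbl]

theorem appCirc_a16 (α : ℂ) : appCirc (.a16 α) = nilTbl 1 (1 / 2) α := by
  norm_num [appCirc, nilTbl]

theorem appCirc_a17 : appCirc .a17 = nilTbl 0 1 0 := by
  simp [appCirc, nilTbl, V2.vec_zero_zero]

theorem appCirc_a18 (α : ℂ) : appCirc (.a18 α) = nilTbl 0 0 α := by
  simp [appCirc, nilTbl, V2.vec_zero_zero]

theorem exists_iso2_of_diagTbl_cA01 (α β : ℂ) :
    ∃ i, Iso2 (tm cA01) (tm (diagTbl α β)) (tm (appMul i)) (tm (appCirc i)) :=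
  ⟨.a10 α β, iso2_diagTbl_cA01_iff.2 (.inl ⟨rfl, rfl⟩)⟩

theorem exists_iso2_of_nilTbl_cA02 (k δ q : ℂ) :
    ∃ i, Iso2 (tm cA02) (tm (nilTbl k δ q)) (tm (appMul i)) (tm (appCirc i)) := by
  by_cases hq : q = 0
  · exact ⟨.a12 k δ, iso2_nilTbl_cA02_iff.2 ⟨rfl, rfl, 1, one_ne_zero, by simp [hq]⟩⟩
  · exact ⟨.a11 k δ, iso2_nilTbl_cA02_iff.2 ⟨rfl, rfl, q, hq, by simp⟩⟩

theorem exists_iso2_of_diagTbl_cA03 (α β : ℂ) :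
    ∃ i, Iso2 (tm cA03) (tm (diagTbl α β)) (tm (appMul i)) (tm (appCirc i)) := by
  by_cases hβ : β = 0
  · refine ⟨.a14 α, ?_⟩
    rw [appCirc_a14]
    exact iso2_diagTbl_cA03_iff.2 ⟨rfl, 1, one_ne_zero, by simp [hβ]⟩
  · exact ⟨.a13 α, iso2_diagTbl_cA03_iff.2 ⟨rfl, β⁻¹, inv_ne_zero hβ, by simp [hβ]⟩⟩

theorem exists_iso2_of_nilTbl_cA04 (k δ q : ℂ) :
    ∃ i, Iso2 (tm cA04) (tm (nilTbl k δ q)) (tm (appMul i)) (tm (appCirc i)) := by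
  by_cases hk : k = 0
  · by_cases hδ : δ = 0
    · refine ⟨.a18 q, ?_⟩
      rw [appCirc_a18]
      exact iso2_nilTbl_cA04_iff.2 ⟨1, 0, one_ne_zero, by simp [hk], by simp [hδ], by simp⟩
    · refine ⟨.a17, ?_⟩
      rw [appCirc_a17]
      exact iso2_nilTbl_cA04_iff.2
        ⟨δ⁻¹, -q / (2 * δ), inv_ne_zero hδ, by simp [hk], by simp [hδ], by
          rw [hk]
          field_simp
          ring⟩
  · by_cases hkδ : δ / k = 1 / 2
    · refine ⟨.a16 q, ?_⟩
      rw [appCirc_a16]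
      exact iso2_nilTbl_cA04_iff.2
        ⟨k⁻¹, 0, inv_ne_zero hk, by simp [hk],
          by simpa [mul_comm, div_eq_mul_inv] using hkδ.symm, by simp⟩
    · have hsub : k - 2 * δ ≠ 0 := by
        intro h
        apply hkδ
        rw [div_eq_div_iff hk two_ne_zero]
        linear_combination -h
      refine ⟨.a15 (δ / k) hkδ, ?_⟩
      rw [appCirc_a15]
      exact iso2_nilTbl_cA04_iff.2
        ⟨k⁻¹, q / (k - 2 * δ), inv_ne_zero hk, by simp [hk], by field_simp, by
          field_simp
          ring⟩

theorem exists_iso2_of_compatible {i : CAIdx} {t : Fin 2 → Fin 2 → V2}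
    (h : Compatible (tm (caAlg i)) (tm t)) :
    ∃ j, Iso2 (tm (caAlg i)) (tm t) (tm (appMul j)) (tm (appCirc j)) := by
  cases i with
  | a01 =>
    obtain ⟨α, β, rfl⟩ := exists_eq_diagTbl_of_compatible_cA01 h
    exact exists_iso2_of_diagTbl_cA01 α β
  | a02 =>
    obtain ⟨k, δ, q, rfl⟩ := exists_eq_nilTbl_of_compatible_cA02 h
    exact exists_iso2_of_nilTbl_cA02 k δ q
  | a03 =>
    obtain ⟨α, β, rfl⟩ := exists_eq_diagTbl_of_compatible_cA03 h
    exact exists_iso2_of_diagTbl_cA03 α β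
  | a04 =>
    obtain ⟨k, δ, q, rfl⟩ := exists_eq_nilTbl_of_compatible_cA04 h
    exact exists_iso2_of_nilTbl_cA04 k δ q

theorem exists_iso2_appAlg {A : Type*} [AddCommGroup A] [Module ℂ A]
    (hdim : Module.finrank ℂ A = 2) {mul circ : A →ₗ[ℂ] A →ₗ[ℂ] A}
    (hcomm : ∀ x y, mul x y = mul y x)
    (hassoc : ∀ x y z, mul (mul x y) z = mul x (mul y z))
    (hcompat : Compatible (fun x y => mul x y) (fun x y => circ x y))
    (hmul : ∃ x y, mul x y ≠ 0) :
    ∃ i, Iso2 (fun x y => mul x y) (fun x y => circ x y) (tm (appMul i)) (tm (appCirc i)) := by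
  obtain ⟨k, hk⟩ := exists_iso1_caAlg hdim hcomm hassoc hmul
  obtain ⟨b, hb⟩ := iso1_tm_iff_exists_basis.1 hk
  obtain ⟨t, ht⟩ := exists_isTable b circ
  have hiso : Iso2 (fun x y => mul x y) (fun x y => circ x y) (tm (caAlg k)) (tm t) :=
    iso2_tm_iff_exists_basis.2 ⟨b, hb, ht⟩
  obtain ⟨i, hi⟩ := exists_iso2_of_compatible (hcompat.of_iso2 hiso)
  exact ⟨i, hiso.trans hi⟩

/-- The index among A01–A04 of the commutative associative multiplication of A10–A18. -/
def APPIdx.mulIdx : APPIdx → CAIdx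
  | .a10 _ _ => .a01
  | .a11 _ _ => .a02
  | .a12 _ _ => .a02
  | .a13 _ => .a03
  | .a14 _ => .a03
  | .a15 _ _ => .a04
  | .a16 _ => .a04
  | .a17 => .a04
  | .a18 _ => .a04

theorem appMul_eq_caAlg_mulIdx (i : APPIdx) : appMul i = caAlg i.mulIdx := by
  cases i <;> rfl

theorem APPIdx.mulIdx_eq_of_iso2 {i j : APPIdx}
    (h : Iso2 (tm (appMul i)) (tm (appCirc i)) (tm (appMul j)) (tm (appCirc j))) :
    i.mulIdx = j.mulIdx := by
  have hmul := h.iso1_left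
  rw [appMul_eq_caAlg_mulIdx, appMul_eq_caAlg_mulIdx] at hmul
  exact eq_of_iso1_caAlg hmul

theorem iso2_a10_swap (α β : ℂ) : Iso2 (tm (appMul (.a10 α β))) (tm (appCirc (.a10 α β)))
    (tm (appMul (.a10 β α))) (tm (appCirc (.a10 β α))) :=
  iso2_diagTbl_cA01_iff.2 (.inr ⟨rfl, rfl⟩)

theorem eq_or_swap_of_iso2 {i j : APPIdx}
    (h : Iso2 (tm (appMul i)) (tm (appCirc i)) (tm (appMul j)) (tm (appCirc j))) :
    i = j ∨ ∃ α β : ℂ, i = .a10 α β ∧ j = .a10 β α := by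
  have hidx := APPIdx.mulIdx_eq_of_iso2 h
  cases i <;> cases j <;> cases hidx <;>
    simp only [appMul, appCirc_a10, appCirc_a11, appCirc_a12, appCirc_a13, appCirc_a14,
      appCirc_a15, appCirc_a16, appCirc_a17, appCirc_a18, iso2_diagTbl_cA01_iff,
      iso2_nilTbl_cA02_iff, iso2_diagTbl_cA03_iff, iso2_nilTbl_cA04_iff, mul_zero, sub_zero,
      add_zero] at h <;> grind

end Classification

/-- Every nonzero 2-dimensional anti-pre-Lie Poisson algebra over ℂ is
isomorphic to one of the anti-pre-Lie algebras A01–A09 (with `· ≡ 0`) or to one of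
A10–A18; moreover among A10–A18 the only nontrivial isomorphism is
`A10^{α,β} ≅ A10^{β,α}`. -/
theorem statement17 (A : Type*) [AddCommGroup A] [Module ℂ A]
    (hdim : Module.finrank ℂ A = 2)
    (mul circ : A →ₗ[ℂ] A →ₗ[ℂ] A)
    (hcomm : ∀ x y : A, mul x y = mul y x)
    (hassoc : ∀ x y z : A, mul (mul x y) z = mul x (mul y z))
    (hap₁ : ∀ x y z : A, circ x (circ y z) - circ y (circ x z) =
      circ (circ y x - circ x y) z)
    (hap₂ : ∀ x y z : A, circ (circ x y - circ y x) z + circ (circ y z - circ z y) x +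
      circ (circ z x - circ x z) y = 0)
    (hcompat₁ : ∀ x y z : A, (2 : ℂ) • mul (circ x y) z - (2 : ℂ) • mul (circ y x) z =
      mul y (circ x z) - mul x (circ y z))
    (hcompat₂ : ∀ x y z : A, (2 : ℂ) • circ x (mul y z) =
      circ (mul z x) y + mul z (circ x y))
    (hnz : (∃ x y : A, mul x y ≠ 0) ∨ (∃ x y : A, circ x y ≠ 0)) :
    ((∃ i : APIdx, Iso2 (fun x y => mul x y) (fun x y => circ x y)
        zm (tm (apAlg i))) ∨
     (∃ i : APPIdx, Iso2 (fun x y => mul x y) (fun x y => circ x y)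
        (tm (appMul i)) (tm (appCirc i)))) ∧
    (∀ α β : ℂ, Iso2 (tm (appMul (.a10 α β))) (tm (appCirc (.a10 α β)))
        (tm (appMul (.a10 β α))) (tm (appCirc (.a10 β α)))) ∧
    (∀ i j : APPIdx, Iso2 (tm (appMul i)) (tm (appCirc i))
        (tm (appMul j)) (tm (appCirc j)) →
        i = j ∨ ∃ α β : ℂ, i = .a10 α β ∧ j = .a10 β α) := by
  refine ⟨?_, iso2_a10_swap, fun i j => eq_or_swap_of_iso2⟩
  by_cases hmul : ∃ x y : A, mul x y ≠ 0
  · exact .inr (exists_iso2_appAlg hdim hcomm hassoc hcompat₂ hmul)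
  · obtain ⟨i, hi⟩ := exists_iso1_apAlg hdim hap₁ (hnz.resolve_left hmul)
    push Not at hmul
    exact .inl ⟨i, hi.iso2_zm hmul⟩
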